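/- arXiv:1605.02579 — 6 statements merged into one kernel-verified Lean document; each statement's English description precedes it below -/
import Mathlib

section
/- Let k be a field and V = Fin 4 → k. Then PGL₄(k) acts transitively on the roots of PG(3,k): for any two roots (Y, L, X) and (Y', L', X') of PG(3,k), there exists a k-linear equivalence g : V ≃ₗ[k] V such that Submodule.map g Y = Y', Submodule.map g L = L', and Submodule.map g X = X'. -/
/-- A root of `PG(3,k)`, in linear-algebra terms: a triple `(Y, L, X)` of `k`-subspaces of
`V = Fin 4 → k`, each of dimension `2`, such that `Y ⊓ L` and `X ⊓ L` are `1`-dimensional,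
`Y ⊓ L ≠ X ⊓ L`, and `(Y ⊔ L) ⊓ (X ⊔ L) = L`. -/
def IsRoot {k : Type*} [Field k] (Y L X : Submodule k (Fin 4 → k)) : Prop :=
  Module.finrank k Y = 2 ∧ Module.finrank k L = 2 ∧ Module.finrank k X = 2 ∧
    Module.finrank k (Y ⊓ L : Submodule k (Fin 4 → k)) = 1 ∧
    Module.finrank k (X ⊓ L : Submodule k (Fin 4 → k)) = 1 ∧
    Y ⊓ L ≠ X ⊓ L ∧ (Y ⊔ L) ⊓ (X ⊔ L) = L

lemma span_pair_of_li {k : Type*} [Field k] {b : Fin 4 → (Fin 4 → k)}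
    (hb : LinearIndependent k b) {W : Submodule k (Fin 4 → k)}
    (hW : Module.finrank k W = 2) (i j : Fin 4) (hij : i ≠ j) (hi : b i ∈ W) (hj : b j ∈ W) :
    Submodule.span k {b i, b j} = W := by
  have hinj : Function.Injective ![i, j] := by
    intro x y hxy
    fin_cases x <;> fin_cases y <;> simp_all
  have h2 := finrank_span_eq_card (hb.comp _ hinj)
  have hr : Set.range (b ∘ ![i, j]) = {b i, b j} := by
    rw [Set.range_comp]; simp [Set.image_pair, Set.pair_comm]
  rw [hr] at h2
  apply Submodule.eq_of_le_of_finrank_eq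
  · rw [Submodule.span_le]
    rintro x (rfl | rfl) <;> assumption
  · rw [h2, hW]; simp

lemma exists_basis_of_isRoot {k : Type*} [Field k] {Y L X : Submodule k (Fin 4 → k)}
    (h : IsRoot Y L X) : ∃ b : Module.Basis (Fin 4) k (Fin 4 → k),
      Submodule.span k {b 0, b 2} = Y ∧ Submodule.span k {b 0, b 1} = L ∧
      Submodule.span k {b 1, b 3} = X := by
  obtain ⟨hY, hL, hX, hYL, hXL, hne, hinf⟩ := h
  have ex : ∀ W : Submodule k (Fin 4 → k), Module.finrank k W = 2 →
      Module.finrank k (W ⊓ L : Submodule k (Fin 4 → k)) = 1 → ∃ e ∈ W, e ∉ L := by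
    intro W h1 h2
    by_contra! hc
    rw [inf_eq_left.2 (show W ≤ L from hc)] at h2
    omega
  obtain ⟨e2, h2Y, h2L⟩ := ex Y hY hYL
  obtain ⟨e3, h3X, h3L⟩ := ex X hX hXL
  have ex1 : ∀ W : Submodule k (Fin 4 → k), Module.finrank k W = 1 →
      ∃ e ∈ W, e ≠ 0 ∧ W ≤ Submodule.span k {e} := by
    intro W h1
    obtain ⟨v, hv, hs⟩ := finrank_eq_one_iff'.1 h1
    refine ⟨v, v.2, by simpa using hv, fun w hw => ?_⟩
    obtain ⟨c, hc⟩ := hs ⟨w, hw⟩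
    exact Submodule.mem_span_singleton.2 ⟨c, congrArg Subtype.val hc⟩
  obtain ⟨e0, h0, h00, h0s⟩ := ex1 _ hYL
  obtain ⟨e1, h1, h10, h1s⟩ := ex1 _ hXL
  have li : LinearIndependent k ![e0, e1, e2, e3] := by
    rw [Fintype.linearIndependent_iff]
    intro g hg
    simp only [Fin.sum_univ_four, Matrix.cons_val] at hg
    have g3 : g 3 = 0 := by
      by_contra hn
      apply h3L
      have : g 3 • e3 ∈ (Y ⊔ L) ⊓ (X ⊔ L) := by
        refine ⟨?_, Submodule.mem_sup_left (X.smul_mem _ h3X)⟩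
        have e : g 3 • e3 = (-g 2) • e2 + ((-g 0) • e0 + (-g 1) • e1) := by
          rw [← sub_eq_zero, ← hg]; module
        rw [e]
        exact Submodule.add_mem_sup (Y.smul_mem _ h2Y)
          (L.add_mem (L.smul_mem _ h0.2) (L.smul_mem _ h1.2))
      rw [hinf] at this
      exact (L.smul_mem_iff hn).1 this
    rw [g3] at hg
    have g2 : g 2 = 0 := by
      by_contra hn
      apply h2L
      rw [← L.smul_mem_iff hn]
      have e : g 2 • e2 = (-g 0) • e0 + (-g 1) • e1 := by
        rw [← sub_eq_zero, ← hg]; module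
      rw [e]
      exact L.add_mem (L.smul_mem _ h0.2) (L.smul_mem _ h1.2)
    rw [g2] at hg
    have g0 : g 0 = 0 := by
      by_contra hn
      apply hne
      have hm : e0 ∈ X ⊓ L := by
        rw [← (X ⊓ L).smul_mem_iff hn]
        have e : g 0 • e0 = (-g 1) • e1 := by
          rw [← sub_eq_zero, ← hg]; module
        rw [e]
        exact (X ⊓ L).smul_mem _ h1
      apply Submodule.eq_of_le_of_finrank_eq
      · refine h0s.trans ?_
        rw [Submodule.span_singleton_le_iff_mem]
        exact hm
      · rw [hYL, hXL]
    rw [g0] at hg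
    have g1 : g 1 = 0 := by simpa [h10] using hg
    intro i
    fin_cases i <;> assumption
  refine ⟨basisOfLinearIndependentOfCardEqFinrank li (by simp), ?_⟩
  rw [coe_basisOfLinearIndependentOfCardEqFinrank]
  exact ⟨span_pair_of_li li hY 0 2 (by decide) h0.1 h2Y,
    span_pair_of_li li hL 0 1 (by decide) h0.2 h1.2,
    span_pair_of_li li hX 1 3 (by decide) h1.1 h3X⟩

/-- `PGL₄(k)` acts transitively on the roots of `PG(3,k)`. -/
theorem PGL_transitive_on_roots {k : Type*} [Field k]
    (Y L X Y' L' X' : Submodule k (Fin 4 → k))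
    (h : IsRoot Y L X) (h' : IsRoot Y' L' X') :
    ∃ g : (Fin 4 → k) ≃ₗ[k] (Fin 4 → k),
      Submodule.map (g : (Fin 4 → k) →ₗ[k] (Fin 4 → k)) Y = Y' ∧
      Submodule.map (g : (Fin 4 → k) →ₗ[k] (Fin 4 → k)) L = L' ∧
      Submodule.map (g : (Fin 4 → k) →ₗ[k] (Fin 4 → k)) X = X' := by
  obtain ⟨b, rfl, rfl, rfl⟩ := exists_basis_of_isRoot h
  obtain ⟨c, rfl, rfl, rfl⟩ := exists_basis_of_isRoot h'
  refine ⟨b.equiv c (Equiv.refl _), ?_, ?_, ?_⟩ <;>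
    simp [Submodule.map_span, Set.image_pair]
end

section
/- Let k be a field, V a finite-dimensional k-vector space, H a hyperplane of V (a submodule with finrank H + 1 = finrank V), and P a 1-dimensional subspace with P ≤ H. If L and L' are 2-dimensional subspaces of V with L ⊓ H = P and L' ⊓ H = P, then there exists a k-linear equivalence g : V ≃ₗ[k] V such that g h = h for every h ∈ H and Submodule.map g L' = L. -/
/-- If `H` is a hyperplane of a finite-dimensional vector space `V`, `P ≤ H` is a point,
and `L`, `L'` are lines with `L ⊓ H = P` and `L' ⊓ H = P`, then some translation with
axis `H` (an automorphism fixing `H` pointwise) maps `L'` onto `L`. -/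
theorem exists_translation_mapping_line {k V : Type*} [Field k] [AddCommGroup V]
    [Module k V] [FiniteDimensional k V]
    (H : Submodule k V) (hH : Module.finrank k H + 1 = Module.finrank k V)
    (P : Submodule k V) (hP : Module.finrank k P = 1) (hPH : P ≤ H)
    (L L' : Submodule k V)
    (hL : Module.finrank k L = 2) (hL' : Module.finrank k L' = 2)
    (hLH : L ⊓ H = P) (hL'H : L' ⊓ H = P) :
    ∃ g : V ≃ₗ[k] V, (∀ h ∈ H, g h = h) ∧
      Submodule.map (g : V →ₗ[k] V) L' = L := by
  have key : ∀ M : Submodule k V, Module.finrank k M = 2 → M ⊓ H = P → ∃ w ∈ M, w ∉ H := by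
    intro M hM hMH
    by_contra hcon
    push Not at hcon
    have h1 : M ⊓ H = M := inf_eq_left.mpr hcon
    rw [h1] at hMH
    rw [hMH] at hM
    omega
  obtain ⟨w, hwL, hwH⟩ := key L hL hLH
  obtain ⟨w', hwL', hwH'⟩ := key L' hL' hL'H
  obtain ⟨f₀, hf₀, hf₀H⟩ := Submodule.exists_le_ker_of_notMem hwH'
  obtain ⟨f, hf, hfH⟩ : ∃ f : V →ₗ[k] k, f w' = 1 ∧ H ≤ LinearMap.ker f := by
    refine ⟨(f₀ w')⁻¹ • f₀, by simp [hf₀], fun x hx => ?_⟩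
    have := hf₀H hx
    rw [LinearMap.mem_ker] at this ⊢
    simp [this]
  have hker : H = LinearMap.ker f := by
    apply Submodule.eq_of_le_of_finrank_le hfH
    have hlt : LinearMap.ker f < ⊤ := by
      rw [lt_top_iff_ne_top]
      intro h
      have : w' ∈ LinearMap.ker f := h ▸ Submodule.mem_top
      rw [LinearMap.mem_ker, hf] at this
      exact one_ne_zero this
    have := Submodule.finrank_lt hlt.ne
    omega
  have hfw : f w ≠ 0 := fun h => hwH (hker ▸ h)
  let g₀ : V →ₗ[k] V := LinearMap.id + f.smulRight (w - w')
  have hg₀ : ∀ x, g₀ x = x + f x • (w - w') := fun x => by simp [g₀]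
  have hinj : Function.Injective g₀ := by
    rw [injective_iff_map_eq_zero]
    intro x hx
    rw [hg₀] at hx
    have h1 : f x * f w = 0 := by
      have := congrArg f hx
      simp only [map_add, map_smul, map_sub, hf, map_zero, smul_eq_mul] at this
      linear_combination this
    have h2 : f x = 0 := (mul_eq_zero.mp h1).resolve_right hfw
    simpa [h2] using hx
  let g := LinearEquiv.ofInjectiveEndo g₀ hinj
  have hg : ∀ x, g x = x + f x • (w - w') := hg₀
  refine ⟨g, fun h hh => ?_, ?_⟩
  · have : f h = 0 := hfH hh
    simp [hg, this]
  · apply Submodule.eq_of_le_of_finrank_eq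
    · rintro _ ⟨x, hx, rfl⟩
      have h1 : x - f x • w' ∈ L' ⊓ H := by
        refine ⟨sub_mem hx (L'.smul_mem _ hwL'), ?_⟩
        rw [hker]
        simp [hf]
      rw [hL'H, ← hLH] at h1
      have h2 : g x = (x - f x • w') + f x • w := by
        rw [hg, smul_sub]; abel
      change g x ∈ L
      rw [h2]
      exact add_mem h1.1 (L.smul_mem _ hwL)
    · rw [hL, ← hL']
      exact LinearEquiv.finrank_map_eq g L'
end

section
/- Let k be a field, V a k-vector space, and let U, W be subspaces of V with U ⊔ W = ⊤ and U ⊓ W ≠ ⊥. If a k-linear equivalence g : V ≃ₗ[k] V satisfies g u ∈ Submodule.span k {u} for every u ∈ U and g w ∈ Submodule.span k {w} for every w ∈ W, then there exists c : k such that g v = c • v for all v ∈ V; in particular g fixes every 1-dimensional subspace of V, i.e. it induces the identity on the projective space of V. -/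
theorem scalar_aux {k V : Type*} [Field k] [AddCommGroup V]
    [Module k V] (U : Submodule k V) (g : V ≃ₗ[k] V)
    (hU : ∀ u ∈ U, g u ∈ Submodule.span k {u}) (x : V) (hx : x ∈ U) (hx0 : x ≠ 0)
    (c : k) (hc : g x = c • x) (u : V) (hu : u ∈ U) : g u = c • u := by
  obtain ⟨a, ha⟩ := Submodule.mem_span_singleton.1 (hU u hu)
  obtain ⟨b, hb⟩ := Submodule.mem_span_singleton.1 (hU (x + u) (U.add_mem hx hu))
  rw [map_add, hc, ← ha, smul_add] at hb
  have h : (b - a) • u = (c - b) • x := by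
    rw [sub_smul, sub_smul, sub_eq_sub_iff_add_eq_add, add_comm, hb]
  by_cases hab : b - a = 0
  · rw [hab, zero_smul] at h
    have h2 : c - b = 0 := (smul_eq_zero.1 h.symm).resolve_right hx0
    rw [← ha, sub_eq_zero.1 h2, sub_eq_zero.1 hab]
  · have h3 : u = ((b - a)⁻¹ * (c - b)) • x := by
      rw [mul_smul, ← h, inv_smul_smul₀ hab]
    rw [h3, map_smul, hc, smul_comm]

/-- If `U ⊔ W = ⊤`, `U ⊓ W ≠ ⊥`, and a linear automorphism `g` of `V` fixes every point of
the projective space lying in `U` or in `W` (i.e. `g u ∈ span {u}` for all `u ∈ U` and all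
`u ∈ W`), then `g` is a scalar map, hence induces the identity collineation. -/
theorem scalar_of_fixes_two_spanning_subspaces {k V : Type*} [Field k] [AddCommGroup V]
    [Module k V] (U W : Submodule k V) (hUW : U ⊔ W = ⊤) (hI : U ⊓ W ≠ ⊥)
    (g : V ≃ₗ[k] V)
    (hU : ∀ u ∈ U, g u ∈ Submodule.span k {u})
    (hW : ∀ w ∈ W, g w ∈ Submodule.span k {w}) :
    ∃ c : k, ∀ v : V, g v = c • v := by
  obtain ⟨x, hx, hx0⟩ := Submodule.exists_mem_ne_zero_of_ne_bot hI
  obtain ⟨c, hc⟩ := Submodule.mem_span_singleton.1 (hU x hx.1)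
  refine ⟨c, fun v => ?_⟩
  have hv : v ∈ U ⊔ W := hUW ▸ Submodule.mem_top
  obtain ⟨u, hu, w, hw, rfl⟩ := Submodule.mem_sup.1 hv
  rw [map_add, smul_add, scalar_aux U g hU x hx.1 hx0 c hc.symm u hu,
    scalar_aux W g hW x hx.2 hx0 c hc.symm w hw]
end

section
/- Let k be a field, V a k-vector space, and let X, Y, L be subspaces of V with X ⊔ Y = ⊤, L ⊓ X ≠ ⊥ and L ⊓ Y ≠ ⊥. If a k-linear equivalence g : V ≃ₗ[k] V satisfies g u ∈ Submodule.span k {u} for every u ∈ X, every u ∈ Y, and every u ∈ L, then there exists c : k such that g v = c • v for all v ∈ V. -/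
theorem eq_smul_of_fixes_points {k V : Type*} [Field k] [AddCommGroup V]
    [Module k V] (W : Submodule k V) (g : V ≃ₗ[k] V)
    (hW : ∀ u ∈ W, g u ∈ Submodule.span k {u}) (u : V) (hu : u ∈ W) (hu0 : u ≠ 0)
    (c : k) (hc : g u = c • u) (w : V) (hw : w ∈ W) : g w = c • w := by
  obtain ⟨d, hd⟩ := Submodule.mem_span_singleton.1 (hW w hw)
  obtain ⟨e, he⟩ := Submodule.mem_span_singleton.1 (hW (u + w) (W.add_mem hu hw))
  rw [map_add, hc, ← hd, smul_add] at he
  have h1 : (e - c) • u = (d - e) • w := by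
    rw [sub_smul, sub_smul, sub_eq_sub_iff_add_eq_add, he, add_comm]
  by_cases h : d - e = 0
  · rw [h, zero_smul, smul_eq_zero] at h1
    have h2 : e - c = 0 := h1.resolve_right hu0
    rw [← hd, sub_eq_zero.1 h, sub_eq_zero.1 h2]
  · have h2 : w = ((d - e)⁻¹ * (e - c)) • u := by
      rw [mul_smul, h1, smul_smul, inv_mul_cancel₀ h, one_smul]
    rw [h2, map_smul, hc, smul_comm]

/-- If `X ⊔ Y = ⊤`, `L` meets both `X` and `Y` nontrivially, and a linear automorphism `g`
of `V` fixes every projective point lying in `X`, in `Y`, or in `L`, then `g` is a scalar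
map. -/
theorem scalar_of_fixes_three_subspaces {k V : Type*} [Field k] [AddCommGroup V]
    [Module k V] (X Y L : Submodule k V) (hXY : X ⊔ Y = ⊤)
    (hLX : L ⊓ X ≠ ⊥) (hLY : L ⊓ Y ≠ ⊥)
    (g : V ≃ₗ[k] V)
    (hX : ∀ u ∈ X, g u ∈ Submodule.span k {u})
    (hY : ∀ u ∈ Y, g u ∈ Submodule.span k {u})
    (hL : ∀ u ∈ L, g u ∈ Submodule.span k {u}) :
    ∃ c : k, ∀ v : V, g v = c • v := by
  obtain ⟨x, hx, hx0⟩ := (Submodule.ne_bot_iff _).1 hLX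
  obtain ⟨y, hy, hy0⟩ := (Submodule.ne_bot_iff _).1 hLY
  obtain ⟨c, hc⟩ := Submodule.mem_span_singleton.1 (hL x hx.1)
  have hcy : g y = c • y := eq_smul_of_fixes_points L g hL x hx.1 hx0 c hc.symm y hy.1
  refine ⟨c, fun v => ?_⟩
  have hv : v ∈ X ⊔ Y := hXY ▸ Submodule.mem_top
  obtain ⟨a, ha, b, hb, rfl⟩ := Submodule.mem_sup.1 hv
  rw [map_add, smul_add, eq_smul_of_fixes_points X g hX x hx.2 hx0 c hc.symm a ha,
    eq_smul_of_fixes_points Y g hY y hy.2 hy0 c hcy b hb]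
end

section
/- Let k be a field, let a, b be natural numbers with a, b ≥ 2, and let V = Fin (a+b) → k. Then PGL_{a+b}(k) acts transitively on the fundaments of type (a,b) of PG(a+b−1,k): for any two fundaments (α, L, β) and (α', L', β') of type (a,b), there exists a k-linear equivalence g : V ≃ₗ[k] V with Submodule.map g α = α', Submodule.map g L = L', and Submodule.map g β = β'. -/
/-- A fundament of type `(a,b)` of `PG(n-1,k)`: a triple `(α, L, β)` of subspaces of
`Fin n → k` with `finrank α = a`, `finrank β = b`, `finrank L = 2`, `α ⊓ L` and `β ⊓ L`
one-dimensional and distinct, and `(α ⊔ L) ⊓ (β ⊔ L) = L`. -/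
def IsFundament {k : Type*} [Field k] {n : ℕ} (a b : ℕ)
    (α L β : Submodule k (Fin n → k)) : Prop :=
  Module.finrank k α = a ∧ Module.finrank k β = b ∧ Module.finrank k L = 2 ∧
    Module.finrank k (α ⊓ L : Submodule k (Fin n → k)) = 1 ∧
    Module.finrank k (β ⊓ L : Submodule k (Fin n → k)) = 1 ∧
    α ⊓ L ≠ β ⊓ L ∧ (α ⊔ L) ⊓ (β ⊔ L) = L

theorem fundament_data {k : Type*} [Field k] (a b : ℕ)
    (α L β : Submodule k (Fin (a + b) → k)) (h : IsFundament a b α L β) :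
    IsCompl α β ∧ ∃ (v : α) (w : β), v ≠ 0 ∧ w ≠ 0 ∧
      L = Submodule.span k {(v : Fin (a + b) → k), (w : Fin (a + b) → k)} := by
  obtain ⟨h1, h2, h3, h4, h5, h6, h7⟩ := h
  have hd : Disjoint α β := by
    rw [disjoint_iff]
    have hL : α ⊓ β ≤ L := by
      rw [← h7]; exact inf_le_inf le_sup_left le_sup_left
    have hP : α ⊓ β ≤ α ⊓ L := le_inf inf_le_left hL
    have hQ : α ⊓ β ≤ β ⊓ L := le_inf inf_le_right hL
    by_contra hne
    have hpos : 1 ≤ Module.finrank k (α ⊓ β : Submodule k (Fin (a + b) → k)) :=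
      Submodule.one_le_finrank_iff.mpr hne
    apply h6
    rw [← Submodule.eq_of_le_of_finrank_le hP (by omega),
      ← Submodule.eq_of_le_of_finrank_le hQ (by omega)]
  refine ⟨⟨hd, ?_⟩, ?_⟩
  · rw [codisjoint_iff]
    apply Submodule.eq_top_of_finrank_eq
    have := Submodule.finrank_sup_add_finrank_inf_eq α β
    rw [disjoint_iff.mp hd, finrank_bot] at this
    rw [Module.finrank_fin_fun]
    omega
  · obtain ⟨v, hv, hv0⟩ := Submodule.exists_mem_ne_zero_of_ne_bot
      (Submodule.one_le_finrank_iff.mp h4.ge)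
    obtain ⟨w, hw, hw0⟩ := Submodule.exists_mem_ne_zero_of_ne_bot
      (Submodule.one_le_finrank_iff.mp h5.ge)
    refine ⟨⟨v, hv.1⟩, ⟨w, hw.1⟩, by simpa using hv0, by simpa using hw0, ?_⟩
    symm
    apply Submodule.eq_of_le_of_finrank_le
    · rw [Submodule.span_le]
      rintro x (rfl | rfl)
      exacts [hv.2, hw.2]
    · rw [h3]
      have hli : LinearIndependent k ![v, w] := by
        rw [LinearIndependent.pair_iff' hv0]
        intro c hc
        apply hw0
        exact Submodule.disjoint_def.mp hd w (hc ▸ α.smul_mem c hv.1) hw.1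
      have := finrank_span_eq_card hli
      have hr : Set.range ![v, w] = {v, w} := by
        ext x; simp [eq_comm, or_comm]
      rw [hr, Fintype.card_fin] at this
      exact this.ge

theorem exists_equiv_vec {k V W : Type*} [Field k] [AddCommGroup V] [Module k V]
    [AddCommGroup W] [Module k W] [FiniteDimensional k V] [FiniteDimensional k W]
    (h : Module.finrank k V = Module.finrank k W) (v : V) (w : W) (hv : v ≠ 0) (hw : w ≠ 0) :
    ∃ e : V ≃ₗ[k] W, e v = w := by
  let e0 := LinearEquiv.ofFinrankEq V W h
  let c := LinearEquiv.toSpanNonzeroSingleton k V v hv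
  have h0 : e0.symm w ≠ 0 := by simpa using hw
  let d := LinearEquiv.toSpanNonzeroSingleton k V (e0.symm w) h0
  obtain ⟨g, hg⟩ := Submodule.exists_linearEquiv_restrict_eq (c.symm ≪≫ₗ d)
  refine ⟨g.trans e0, ?_⟩
  have h1 := hg (c 1)
  have h2 : ((c 1 : Submodule.span k {v}) : V) = v := by
    simp [c]
  rw [h2] at h1
  simp [← h1, d]


/-- `PGL_{a+b}(k)` acts transitively on the fundaments of type `(a,b)` of `PG(a+b-1,k)`. -/
theorem PGL_transitive_on_fundaments {k : Type*} [Field k]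
    (a b : ℕ) (ha : 2 ≤ a) (hb : 2 ≤ b)
    (α L β α' L' β' : Submodule k (Fin (a + b) → k))
    (h : IsFundament a b α L β) (h' : IsFundament a b α' L' β') :
    ∃ g : (Fin (a + b) → k) ≃ₗ[k] (Fin (a + b) → k),
      Submodule.map (g : (Fin (a + b) → k) →ₗ[k] (Fin (a + b) → k)) α = α' ∧
      Submodule.map (g : (Fin (a + b) → k) →ₗ[k] (Fin (a + b) → k)) L = L' ∧
      Submodule.map (g : (Fin (a + b) → k) →ₗ[k] (Fin (a + b) → k)) β = β' := by
  obtain ⟨hc, v, w, hv, hw, hL⟩ := fundament_data a b α L β h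
  obtain ⟨hc', v', w', hv', hw', hL'⟩ := fundament_data a b α' L' β' h'
  obtain ⟨e, he⟩ := exists_equiv_vec (h.1.trans h'.1.symm) v v' hv hv'
  obtain ⟨f, hf⟩ := exists_equiv_vec (h.2.1.trans h'.2.1.symm) w w' hw hw'
  let g := (Submodule.prodEquivOfIsCompl α β hc).symm ≪≫ₗ (e.prodCongr f) ≪≫ₗ
    (Submodule.prodEquivOfIsCompl α' β' hc')
  have hgα : ∀ x : α, g x = e x := by intro x; simp [g]
  have hgβ : ∀ x : β, g x = f x := by intro x; simp [g]
  refine ⟨g, ?_, ?_, ?_⟩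
  · apply Submodule.eq_of_le_of_finrank_eq
    · rintro _ ⟨x, hx, rfl⟩
      exact (hgα ⟨x, hx⟩).symm ▸ (e ⟨x, hx⟩).2
    · rw [LinearEquiv.finrank_map_eq, h.1, h'.1]
  · rw [hL, hL', Submodule.map_span, Set.image_pair]
    simp only [LinearEquiv.coe_coe, hgα, hgβ, he, hf]
  · apply Submodule.eq_of_le_of_finrank_eq
    · rintro _ ⟨x, hx, rfl⟩
      exact (hgβ ⟨x, hx⟩).symm ▸ (f ⟨x, hx⟩).2
    · rw [LinearEquiv.finrank_map_eq, h.2.1, h'.2.1]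
end

section
/- Let k be a field. The group of self-homeomorphisms of the topological space PrimeSpectrum (Polynomial k) is isomorphic, as a group, to the symmetric group on the set of closed points: Nonempty ((PrimeSpectrum (Polynomial k) ≃ₜ PrimeSpectrum (Polynomial k)) ≃* Equiv.Perm {p : PrimeSpectrum (Polynomial k) // p.asIdeal.IsMaximal}). -/
/-- The group of self-homeomorphisms of a topological space, with `f * g = g.trans f`
(i.e. composition `f ∘ g`). -/
instance homeomorphSelfGroup {X : Type*} [TopologicalSpace X] : Group (X ≃ₜ X) where
  mul f g := g.trans f
  one := Homeomorph.refl X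
  inv := Homeomorph.symm
  mul_assoc f g h := Homeomorph.ext fun _ => rfl
  one_mul f := Homeomorph.ext fun _ => rfl
  mul_one f := Homeomorph.ext fun _ => rfl
  inv_mul_cancel f := Homeomorph.ext fun x => f.symm_apply_apply x

open PrimeSpectrum in
lemma specPoly_eq_bot {k : Type*} [Field k] (p : PrimeSpectrum (Polynomial k))
    (h : ¬ p.asIdeal.IsMaximal) : p.asIdeal = ⊥ := by
  by_contra hb
  exact h (p.isPrime.isMaximal hb)

open PrimeSpectrum in
lemma specPoly_closed {k : Type*} [Field k] (S : Set (PrimeSpectrum (Polynomial k)))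
    (hS : IsClosed S) :
    S = Set.univ ∨ (S.Finite ∧ ∀ p ∈ S, p.asIdeal.IsMaximal) := by
  obtain ⟨I, rfl⟩ := (isClosed_iff_zeroLocus_ideal S).1 hS
  by_cases hI : I = ⊥
  · left
    subst hI
    exact zeroLocus_bot
  · right
    have hmax : ∀ p ∈ zeroLocus (I : Set (Polynomial k)), p.asIdeal.IsMaximal := by
      intro p hp
      by_contra h
      have h1 := specPoly_eq_bot p h
      have h2 : I ≤ p.asIdeal := hp
      exact hI (le_bot_iff.1 (h1 ▸ h2))
    refine ⟨?_, hmax⟩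
    refine Set.Finite.of_finite_image (f := asIdeal) ?_
      (fun a _ b _ hab => PrimeSpectrum.ext hab)
    refine (Ideal.finite_minimalPrimes_of_isNoetherianRing (Polynomial k) I).subset ?_
    rintro _ ⟨p, hp, rfl⟩
    refine ⟨⟨p.isPrime, hp⟩, ?_⟩
    rintro q ⟨hq, hIq⟩ hqp
    have hq0 : q ≠ ⊥ := fun h => hI (le_bot_iff.1 (h ▸ hIq))
    exact ((hq.isMaximal hq0).eq_of_le p.isPrime.ne_top hqp).ge

open PrimeSpectrum in
lemma specPoly_closed_of_finite {k : Type*} [Field k] (S : Set (PrimeSpectrum (Polynomial k)))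
    (hS : S.Finite) (h : ∀ p ∈ S, p.asIdeal.IsMaximal) : IsClosed S := by
  rw [← Set.biUnion_of_singleton S]
  exact hS.isClosed_biUnion fun p hp => (isClosed_singleton_iff_isMaximal p).2 (h p hp)

open scoped Classical in
lemma specPoly_continuous {k : Type*} [Field k]
    (σ : Equiv.Perm {p : PrimeSpectrum (Polynomial k) // p.asIdeal.IsMaximal}) :
    Continuous (Equiv.Perm.ofSubtype σ) := by
  rw [continuous_iff_isClosed]
  intro S hS
  rcases specPoly_closed S hS with rfl | ⟨hf, hm⟩
  · simp
  · refine specPoly_closed_of_finite _ (hf.preimage (Equiv.injective _).injOn) ?_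
    intro p hp
    by_contra hn
    have h1 := hm _ hp
    rw [Equiv.Perm.ofSubtype_apply_of_not_mem σ hn] at h1
    exact hn h1

lemma specPoly_homeo_max {k : Type*} [Field k]
    (f : PrimeSpectrum (Polynomial k) ≃ₜ PrimeSpectrum (Polynomial k))
    (p : PrimeSpectrum (Polynomial k)) :
    (f p).asIdeal.IsMaximal ↔ p.asIdeal.IsMaximal := by
  rw [← PrimeSpectrum.isClosed_singleton_iff_isMaximal,
    ← PrimeSpectrum.isClosed_singleton_iff_isMaximal, ← Set.image_singleton, f.isClosed_image]

/-- The topological automorphism group of `Spec k[X]`, for `k` a field, is the symmetric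
group on the set of closed points. -/
theorem topAut_specPolynomial_iso_perm_closedPoints {k : Type*} [Field k] :
    Nonempty ((PrimeSpectrum (Polynomial k) ≃ₜ PrimeSpectrum (Polynomial k)) ≃*
      Equiv.Perm {p : PrimeSpectrum (Polynomial k) // p.asIdeal.IsMaximal}) := by
  classical
  refine ⟨{
    toFun := fun f => Equiv.Perm.subtypePerm f.toEquiv (specPoly_homeo_max f)
    invFun := fun σ =>
      { toEquiv := Equiv.Perm.ofSubtype σ
        continuous_toFun := specPoly_continuous σ
        continuous_invFun := by
          have := specPoly_continuous σ⁻¹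
          rw [map_inv] at this
          exact this }
    left_inv := ?_
    right_inv := ?_
    map_mul' := ?_ }⟩
  · intro f
    refine Homeomorph.ext fun p => ?_
    by_cases hp : p.asIdeal.IsMaximal
    · exact Equiv.Perm.ofSubtype_apply_of_mem (p := fun q : PrimeSpectrum (Polynomial k) => q.asIdeal.IsMaximal)
        (Equiv.Perm.subtypePerm f.toEquiv (specPoly_homeo_max f)) hp
    · refine (Equiv.Perm.ofSubtype_apply_of_not_mem (p := fun q : PrimeSpectrum (Polynomial k) => q.asIdeal.IsMaximal)
        (Equiv.Perm.subtypePerm f.toEquiv (specPoly_homeo_max f)) hp).trans ?_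
      have h2 : ¬ (f p).asIdeal.IsMaximal := fun h => hp ((specPoly_homeo_max f p).1 h)
      exact PrimeSpectrum.ext ((specPoly_eq_bot _ hp).trans (specPoly_eq_bot _ h2).symm)
  · intro σ
    refine Equiv.ext fun p => Subtype.ext ?_
    exact Equiv.Perm.ofSubtype_apply_coe σ p
  · intro f g
    rfl
end
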